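/- Suppose Ψ has trivial 1-jet at (p,r), D²φ_{(p,r)} = 0, and for all U, V ∈ ℝᵐ × ℝ the function Δ_{U,V} vanishes at (p,r) together with its first and second Fréchet derivatives. Then for all U, V, W₁, W₂ ∈ ℝᵐ × ℝ: a(p,r)(D³φ_{(p,r)}(U,W₁,W₂), V_M) + a(p,r)(U_M, D³φ_{(p,r)}(V,W₁,W₂)) = − D²δ_{(p,r)}(W₁,W₂) · ∂_t a(p,r)(U_M, V_M). -/

import Mathlib

/-!
Differentiate `Δ_{U,V} = (g ∘ Ψ)(Dφ U, Dφ V) − g(U_M, V_M)` twice at `z = (p, r)`, where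
`g(x, t) = a(x, t)`. As `D²φ` vanishes at `z`, the fields `v ↦ Dφ_v U` and `v ↦ Dφ_v V` are
critical there, so no mixed terms appear in the Leibniz rule. As `Ψ` is tangent to the identity at
`z`, `D²(g ∘ Ψ) = D²g + Dg(D²Ψ)` with `D²Ψ = (0, D²δ)`. The two copies of `D²g(U_M, V_M)` cancel,
and the symmetry of `D³φ` puts what remains into the form of the equation.
-/

/-- The defect of the isometry equation for the lightlike metric
`g_{(x,t)}(U,V) = a(x,t)(U_M, V_M)` on `M × I ⊆ ℝᵐ × ℝ` under a candidate isometry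
`Ψ = (φ, δ)`:
`Δ_{U,V}(v) = a(Ψ(v))(Dφ_v U, Dφ_v V) − a(v)(U_M, V_M)`. -/
noncomputable def lightDelta (m : ℕ)
    (a : (Fin m → ℝ) → ℝ → ((Fin m → ℝ) →L[ℝ] (Fin m → ℝ) →L[ℝ] ℝ))
    (φ : (Fin m → ℝ) × ℝ → (Fin m → ℝ)) (δ : (Fin m → ℝ) × ℝ → ℝ)
    (U V : (Fin m → ℝ) × ℝ) (v : (Fin m → ℝ) × ℝ) : ℝ :=
  a (φ v) (δ v) (fderiv ℝ φ v U) (fderiv ℝ φ v V) - a v.1 v.2 U.1 V.1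

open Topology

section SecondDerivative

variable {𝕜 E F G H : Type*} [NontriviallyNormedField 𝕜]
  [NormedAddCommGroup E] [NormedSpace 𝕜 E] [NormedAddCommGroup F] [NormedSpace 𝕜 F]
  [NormedAddCommGroup G] [NormedSpace 𝕜 G] [NormedAddCommGroup H] [NormedSpace 𝕜 H]
  {z : E}

lemma eventually_differentiableAt_of_contDiffAt_two {f : E → F} (hf : ContDiffAt 𝕜 2 f z) :
    ∀ᶠ v in 𝓝 z, DifferentiableAt 𝕜 f v :=
  (hf.eventually (by simp)).mono fun _ hv => hv.differentiableAt two_ne_zero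

lemma differentiableAt_fderiv_of_contDiffAt_two {f : E → F} (hf : ContDiffAt 𝕜 2 f z) :
    DifferentiableAt 𝕜 (fderiv 𝕜 f) z :=
  (hf.fderiv_right one_add_one_eq_two.le).differentiableAt one_ne_zero

lemma fderiv_clm_apply_const {L : E → F →L[𝕜] G} (hL : DifferentiableAt 𝕜 L z) (u : F) (w : E) :
    fderiv 𝕜 (fun v => L v u) z w = fderiv 𝕜 L z w u := by
  simp [fderiv_clm_apply hL (differentiableAt_const u)]

lemma fderiv_apply_zero_prodMk {f : E × F → G} {p : E} {r : F} (hf : DifferentiableAt 𝕜 f (p, r))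
    (τ : F) : fderiv 𝕜 f (p, r) (0, τ) = fderiv 𝕜 (fun t => f (p, t)) r τ := by
  have h : HasFDerivAt (fun t => f (p, t)) (fderiv 𝕜 f (p, r) ∘L .inr 𝕜 E F) r :=
    hf.hasFDerivAt.comp r (hasFDerivAt_prodMk_right p r)
  simp [h.fderiv]

lemma fderiv_fderiv_apply_eq_of_eventually {f h : E → F} (hf : ContDiffAt 𝕜 2 f z) {w : E}
    (hw : ∀ᶠ v in 𝓝 z, fderiv 𝕜 f v w = h v) (w' : E) :
    fderiv 𝕜 (fderiv 𝕜 f) z w' w = fderiv 𝕜 h z w' := by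
  rw [← Filter.EventuallyEq.fderiv_eq hw,
    fderiv_clm_apply_const (differentiableAt_fderiv_of_contDiffAt_two hf)]

lemma fderiv_fderiv_sub {f g : E → F} (hf : ContDiffAt 𝕜 2 f z) (hg : ContDiffAt 𝕜 2 g z) :
    fderiv 𝕜 (fderiv 𝕜 fun v => f v - g v) z
      = fderiv 𝕜 (fderiv 𝕜 f) z - fderiv 𝕜 (fderiv 𝕜 g) z := by
  have h : (fderiv 𝕜 fun v => f v - g v) =ᶠ[𝓝 z] fun v => fderiv 𝕜 f v - fderiv 𝕜 g v := by
    filter_upwards [eventually_differentiableAt_of_contDiffAt_two hf,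
      eventually_differentiableAt_of_contDiffAt_two hg] with v hfv hgv
    exact fderiv_fun_sub hfv hgv
  rw [h.fderiv_eq, fderiv_fun_sub (differentiableAt_fderiv_of_contDiffAt_two hf)
    (differentiableAt_fderiv_of_contDiffAt_two hg)]

lemma fderiv_fderiv_prodMk {f : E → F} {g : E → G} (hf : ContDiffAt 𝕜 2 f z)
    (hg : ContDiffAt 𝕜 2 g z) (w w' : E) :
    fderiv 𝕜 (fderiv 𝕜 fun v => (f v, g v)) z w w'
      = (fderiv 𝕜 (fderiv 𝕜 f) z w w', fderiv 𝕜 (fderiv 𝕜 g) z w w') := by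
  have hf' := differentiableAt_fderiv_of_contDiffAt_two hf
  have hg' := differentiableAt_fderiv_of_contDiffAt_two hg
  have h : ∀ᶠ v in 𝓝 z,
      fderiv 𝕜 (fun v => (f v, g v)) v w' = (fderiv 𝕜 f v w', fderiv 𝕜 g v w') := by
    filter_upwards [eventually_differentiableAt_of_contDiffAt_two hf,
      eventually_differentiableAt_of_contDiffAt_two hg] with v hfv hgv
    simp [hfv.fderiv_prodMk hgv]
  rw [fderiv_fderiv_apply_eq_of_eventually (hf.prodMk hg) h,
    (hf'.clm_apply (differentiableAt_const w')).fderiv_prodMk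
      (hg'.clm_apply (differentiableAt_const w')),
    ContinuousLinearMap.prod_apply, fderiv_clm_apply_const hf', fderiv_clm_apply_const hg']

lemma fderiv_fderiv_comp {g : F → G} {f : E → F} (hg : ContDiffAt 𝕜 2 g (f z))
    (hf : ContDiffAt 𝕜 2 f z) (w w' : E) :
    fderiv 𝕜 (fderiv 𝕜 fun v => g (f v)) z w w'
      = fderiv 𝕜 (fderiv 𝕜 g) (f z) (fderiv 𝕜 f z w) (fderiv 𝕜 f z w')
        + fderiv 𝕜 g (f z) (fderiv 𝕜 (fderiv 𝕜 f) z w w') := by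
  have hg' := differentiableAt_fderiv_of_contDiffAt_two hg
  have hf' := differentiableAt_fderiv_of_contDiffAt_two hf
  have hfz := hf.differentiableAt two_ne_zero
  have hgf : DifferentiableAt 𝕜 (fun v => fderiv 𝕜 g (f v)) z := hg'.comp z hfz
  have h : ∀ᶠ v in 𝓝 z,
      fderiv 𝕜 (fun v => g (f v)) v w' = fderiv 𝕜 g (f v) (fderiv 𝕜 f v w') := by
    filter_upwards [eventually_differentiableAt_of_contDiffAt_two hf,
      hf.continuousAt.eventually (eventually_differentiableAt_of_contDiffAt_two hg)] with v hfv hgv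
    simp [fderiv_fun_comp v hgv hfv]
  rw [fderiv_fderiv_apply_eq_of_eventually (hg.fun_comp z hf) h,
    fderiv_clm_apply hgf (hf'.clm_apply (differentiableAt_const w')),
    fderiv_fun_comp z hg' hfz]
  simp [fderiv_clm_apply_const hf', add_comm]

lemma fderiv_fderiv_clm_apply {c : E → F →L[𝕜] G} {u : E → F} (hc : ContDiffAt 𝕜 2 c z)
    (hu : ContDiffAt 𝕜 2 u z) (w w' : E) :
    fderiv 𝕜 (fderiv 𝕜 fun v => c v (u v)) z w w'
      = fderiv 𝕜 (fderiv 𝕜 c) z w w' (u z) + fderiv 𝕜 c z w (fderiv 𝕜 u z w')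
        + fderiv 𝕜 c z w' (fderiv 𝕜 u z w) + c z (fderiv 𝕜 (fderiv 𝕜 u) z w w') := by
  have hcz := hc.differentiableAt two_ne_zero
  have huz := hu.differentiableAt two_ne_zero
  have hc' := differentiableAt_fderiv_of_contDiffAt_two hc
  have hu' := differentiableAt_fderiv_of_contDiffAt_two hu
  have hcw := hc'.clm_apply (differentiableAt_const w')
  have huw := hu'.clm_apply (differentiableAt_const w')
  have h : ∀ᶠ v in 𝓝 z, fderiv 𝕜 (fun v => c v (u v)) v w'
      = c v (fderiv 𝕜 u v w') + fderiv 𝕜 c v w' (u v) := by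
    filter_upwards [eventually_differentiableAt_of_contDiffAt_two hc,
      eventually_differentiableAt_of_contDiffAt_two hu] with v hcv huv
    simp [fderiv_clm_apply hcv huv]
  rw [fderiv_fderiv_apply_eq_of_eventually (hc.clm_apply hu) h,
    fderiv_fun_add (hcz.clm_apply huw) (hcw.clm_apply huz),
    fderiv_clm_apply hcz huw, fderiv_clm_apply hcw huz]
  simp only [add_apply, ContinuousLinearMap.comp_apply,
    ContinuousLinearMap.flip_apply, fderiv_clm_apply_const hc', fderiv_clm_apply_const hu']
  abel

lemma fderiv_fderiv_clm_apply₂_of_fderiv_eq_zero {b : E → F →L[𝕜] G →L[𝕜] H} {x : E → F}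
    {y : E → G} (hb : ContDiffAt 𝕜 2 b z) (hx : ContDiffAt 𝕜 2 x z) (hy : ContDiffAt 𝕜 2 y z)
    (hx₀ : fderiv 𝕜 x z = 0) (hy₀ : fderiv 𝕜 y z = 0) (w w' : E) :
    fderiv 𝕜 (fderiv 𝕜 fun v => b v (x v) (y v)) z w w'
      = fderiv 𝕜 (fderiv 𝕜 b) z w w' (x z) (y z) + b z (fderiv 𝕜 (fderiv 𝕜 x) z w w') (y z)
        + b z (x z) (fderiv 𝕜 (fderiv 𝕜 y) z w w') := by
  simp [fderiv_fderiv_clm_apply (hb.clm_apply hx) hy, fderiv_fderiv_clm_apply hb hx, hx₀, hy₀]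

end SecondDerivative

section ThirdDerivative

variable {𝕜 E F : Type*} [NontriviallyNormedField 𝕜]
  [NormedAddCommGroup E] [NormedSpace 𝕜 E] [NormedAddCommGroup F] [NormedSpace 𝕜 F]
  {f : E → F} {z : E}

lemma contDiffAt_fderiv_of_minSmoothness_three (hf : ContDiffAt 𝕜 (minSmoothness 𝕜 3) f z) :
    ContDiffAt 𝕜 (minSmoothness 𝕜 2) (fderiv 𝕜 f) z :=
  hf.fderiv_right (by rw [← minSmoothness_add, two_add_one_eq_three])

lemma fderiv_fderiv_fderiv_rotate (hf : ContDiffAt 𝕜 (minSmoothness 𝕜 3) f z) (u v w : E) :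
    fderiv 𝕜 (fderiv 𝕜 (fderiv 𝕜 f)) z u v w = fderiv 𝕜 (fderiv 𝕜 (fderiv 𝕜 f)) z w u v := by
  have hf' := contDiffAt_fderiv_of_minSmoothness_three hf
  have hf'' := differentiableAt_fderiv_of_contDiffAt_two (hf'.of_le le_minSmoothness)
  have apply_const (v w : E) : fderiv 𝕜 (fderiv 𝕜 (fderiv 𝕜 f)) z u v w
      = fderiv 𝕜 (fun x => fderiv 𝕜 (fderiv 𝕜 f) x v w) z u := by
    rw [fderiv_clm_apply_const (hf''.clm_apply (differentiableAt_const v)),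
      fderiv_clm_apply_const hf'']
  have symm_near : (fun x => fderiv 𝕜 (fderiv 𝕜 f) x v w) =ᶠ[𝓝 z]
      fun x => fderiv 𝕜 (fderiv 𝕜 f) x w v := by
    filter_upwards [hf.eventually (by simp)] with x hx
    exact hx.isSymmSndFDerivAt (minSmoothness_monotone (by norm_num)) v w
  calc fderiv 𝕜 (fderiv 𝕜 (fderiv 𝕜 f)) z u v w
      = fderiv 𝕜 (fderiv 𝕜 (fderiv 𝕜 f)) z u w v := by
        rw [apply_const, symm_near.fderiv_eq, apply_const]
    _ = fderiv 𝕜 (fderiv 𝕜 (fderiv 𝕜 f)) z w u v := by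
        rw [hf'.isSymmSndFDerivAt le_rfl u w]

lemma fderiv_fderiv_fderiv_apply_const (hf : ContDiffAt 𝕜 (minSmoothness 𝕜 3) f z) (u w w' : E) :
    fderiv 𝕜 (fderiv 𝕜 fun v => fderiv 𝕜 f v u) z w w'
      = fderiv 𝕜 (fderiv 𝕜 (fderiv 𝕜 f)) z u w w' := by
  have hf' : ContDiffAt 𝕜 2 (fderiv 𝕜 f) z :=
    (contDiffAt_fderiv_of_minSmoothness_three hf).of_le le_minSmoothness
  simp [fderiv_fderiv_clm_apply hf' contDiffAt_const, fderiv_fderiv_fderiv_rotate hf w w' u]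

end ThirdDerivative

section LightlikeMetric

variable {𝕜 E T F : Type*} [NontriviallyNormedField 𝕜]
  [NormedAddCommGroup E] [NormedSpace 𝕜 E] [NormedAddCommGroup T] [NormedSpace 𝕜 T]
  [NormedAddCommGroup F] [NormedSpace 𝕜 F]

/-- The isometry defect `Δ_{U,V}` of `Ψ = (φ, δ)`, for a field `g` of `F`-valued bilinear forms on
`E` over `E × T`, evaluated on the `E`-components of vectors. With `E = ℝᵐ` and `T = F = ℝ` it is
`lightDelta`, except that `g` takes its base point uncurried. -/
noncomputable def isometryDefect (g : E × T → E →L[𝕜] E →L[𝕜] F) (φ : E × T → E) (δ : E × T → T)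
    (U V v : E × T) : F :=
  g (φ v, δ v) (fderiv 𝕜 φ v U) (fderiv 𝕜 φ v V) - g v U.1 V.1

variable {g : E × T → E →L[𝕜] E →L[𝕜] F} {φ : E × T → E} {δ : E × T → T} {p : E} {r : T}

lemma fderiv_fderiv_comp_prodMk_of_fderiv_eq_id {h : E × T → F} (hh : ContDiffAt 𝕜 2 h (p, r))
    (hφ : ContDiffAt 𝕜 2 φ (p, r)) (hδ : ContDiffAt 𝕜 2 δ (p, r))
    (hΨ : (φ (p, r), δ (p, r)) = (p, r))
    (hDΨ : fderiv 𝕜 (fun v => (φ v, δ v)) (p, r) = .id 𝕜 (E × T))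
    (hD2φ : fderiv 𝕜 (fderiv 𝕜 φ) (p, r) = 0) (w w' : E × T) :
    fderiv 𝕜 (fderiv 𝕜 fun v => h (φ v, δ v)) (p, r) w w'
      = fderiv 𝕜 (fderiv 𝕜 h) (p, r) w w'
        + fderiv 𝕜 (fun t => h (p, t)) r (fderiv 𝕜 (fderiv 𝕜 δ) (p, r) w w') := by
  rw [fderiv_fderiv_comp (f := fun v => (φ v, δ v)) (by rwa [hΨ]) (hφ.prodMk hδ), hΨ, hDΨ,
    fderiv_fderiv_prodMk hφ hδ, hD2φ,
    ← fderiv_apply_zero_prodMk (hh.differentiableAt two_ne_zero)]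
  rfl

lemma fderiv_fderiv_isometryDefect (hg : ContDiffAt 𝕜 2 g (p, r))
    (hφ : ContDiffAt 𝕜 (minSmoothness 𝕜 3) φ (p, r)) (hδ : ContDiffAt 𝕜 2 δ (p, r))
    (hΨ : (φ (p, r), δ (p, r)) = (p, r))
    (hDΨ : fderiv 𝕜 (fun v => (φ v, δ v)) (p, r) = .id 𝕜 (E × T))
    (hD2φ : fderiv 𝕜 (fderiv 𝕜 φ) (p, r) = 0) (U V w w' : E × T) :
    fderiv 𝕜 (fderiv 𝕜 (isometryDefect g φ δ U V)) (p, r) w w'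
      = g (p, r) (fderiv 𝕜 (fderiv 𝕜 (fderiv 𝕜 φ)) (p, r) U w w') V.1
        + g (p, r) U.1 (fderiv 𝕜 (fderiv 𝕜 (fderiv 𝕜 φ)) (p, r) V w w')
        + fderiv 𝕜 (fun t => g (p, t)) r (fderiv 𝕜 (fderiv 𝕜 δ) (p, r) w w') U.1 V.1 := by
  have hφ₂ : ContDiffAt 𝕜 2 φ (p, r) :=
    hφ.of_le (le_trans (by norm_num) (le_minSmoothness (n := 3)))
  have hφ' : ContDiffAt 𝕜 2 (fderiv 𝕜 φ) (p, r) :=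
    (contDiffAt_fderiv_of_minSmoothness_three hφ).of_le le_minSmoothness
  have hgΨ : ContDiffAt 𝕜 2 (fun v => g (φ v, δ v)) (p, r) :=
    ContDiffAt.fun_comp (p, r) (f := fun v => (φ v, δ v)) (by rwa [hΨ]) (hφ₂.prodMk hδ)
  have hDφ (X : E × T) : fderiv 𝕜 φ (p, r) X = X.1 := by
    have h := (hφ₂.differentiableAt two_ne_zero).fderiv_prodMk (hδ.differentiableAt two_ne_zero)
    simpa using (congrArg (fun L => (L X).1) (hDΨ.symm.trans h)).symm
  have hφX (X : E × T) : ContDiffAt 𝕜 2 (fun v => fderiv 𝕜 φ v X) (p, r) :=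
    hφ'.clm_apply contDiffAt_const
  have hφX₀ (X : E × T) : fderiv 𝕜 (fun v => fderiv 𝕜 φ v X) (p, r) = 0 := by
    refine ContinuousLinearMap.ext fun w => ?_
    simp [fderiv_clm_apply_const (hφ'.differentiableAt two_ne_zero), hD2φ]
  unfold isometryDefect
  rw [fderiv_fderiv_sub ((hgΨ.clm_apply (hφX U)).clm_apply (hφX V))
      ((hg.clm_apply contDiffAt_const).clm_apply contDiffAt_const),
    sub_apply, sub_apply,
    fderiv_fderiv_clm_apply₂_of_fderiv_eq_zero hgΨ (hφX U) (hφX V) (hφX₀ U) (hφX₀ V),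
    fderiv_fderiv_clm_apply₂_of_fderiv_eq_zero hg contDiffAt_const contDiffAt_const
      (by simp) (by simp),
    fderiv_fderiv_comp_prodMk_of_fderiv_eq_id hg hφ₂ hδ hΨ hDΨ hD2φ,
    fderiv_fderiv_fderiv_apply_const hφ, fderiv_fderiv_fderiv_apply_const hφ, hDφ, hDφ, hΨ]
  simp only [add_apply, fderiv_fun_const, fderiv_zero, Pi.zero_apply, zero_apply, map_zero,
    add_zero]
  abel

theorem lightlike_third_jet_equation_general (hg : ContDiffAt 𝕜 2 g (p, r))
    (hφ : ContDiffAt 𝕜 (minSmoothness 𝕜 3) φ (p, r)) (hδ : ContDiffAt 𝕜 2 δ (p, r))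
    (hΨ : (φ (p, r), δ (p, r)) = (p, r))
    (hDΨ : fderiv 𝕜 (fun v => (φ v, δ v)) (p, r) = .id 𝕜 (E × T))
    (hD2φ : fderiv 𝕜 (fderiv 𝕜 φ) (p, r) = 0) {U V w w' : E × T}
    (hΔ : fderiv 𝕜 (fderiv 𝕜 (isometryDefect g φ δ U V)) (p, r) w w' = 0) :
    g (p, r) (fderiv 𝕜 (fderiv 𝕜 (fderiv 𝕜 φ)) (p, r) U w w') V.1
        + g (p, r) U.1 (fderiv 𝕜 (fderiv 𝕜 (fderiv 𝕜 φ)) (p, r) V w w')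
      = -fderiv 𝕜 (fun t => g (p, t)) r (fderiv 𝕜 (fderiv 𝕜 δ) (p, r) w w') U.1 V.1 :=
  eq_neg_of_add_eq_zero_left <|
    (fderiv_fderiv_isometryDefect hg hφ hδ hΨ hDΨ hD2φ U V w w').symm.trans hΔ

end LightlikeMetric

/-- For a `3`-isometry `Ψ = (φ, δ)` of a lightlike metric with trivial `1`-jet at
`(p,r)` and `D²φ_{(p,r)} = 0`, the third derivative of the base component satisfies
`a(p,r)(D³φ(U,W₁,W₂), V_M) + a(p,r)(U_M, D³φ(V,W₁,W₂))
  = − D²δ(W₁,W₂) · ∂_t a(p,r)(U_M, V_M)`. -/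
theorem lightlike_third_jet_equation
    (m : ℕ) (hm : 1 ≤ m) (M : Set (Fin m → ℝ)) (hM : IsOpen M)
    (p : Fin m → ℝ) (hp : p ∈ M)
    (I : Set ℝ) (hIopen : IsOpen I) (hIconn : I.OrdConnected)
    (r : ℝ) (hr : r ∈ I)
    (a : (Fin m → ℝ) → ℝ → ((Fin m → ℝ) →L[ℝ] (Fin m → ℝ) →L[ℝ] ℝ))
    (ha_smooth : ContDiffOn ℝ (⊤ : ℕ∞) (fun q : (Fin m → ℝ) × ℝ => a q.1 q.2) (M ×ˢ I))
    (ha_symm : ∀ x ∈ M, ∀ t ∈ I, ∀ U V : Fin m → ℝ, a x t U V = a x t V U)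
    (ha_pos : ∀ x ∈ M, ∀ t ∈ I, ∀ U : Fin m → ℝ, U ≠ 0 → 0 < a x t U U)
    (φ : (Fin m → ℝ) × ℝ → (Fin m → ℝ)) (δ : (Fin m → ℝ) × ℝ → ℝ)
    (hΨ_smooth : ContDiffOn ℝ (⊤ : ℕ∞) (fun v => (φ v, δ v)) (M ×ˢ I))
    (hΨ_maps : ∀ v ∈ M ×ˢ I, (φ v, δ v) ∈ M ×ˢ I)
    (hΨp : (φ (p, r), δ (p, r)) = (p, r))
    (hDΨp : fderiv ℝ (fun v => (φ v, δ v)) (p, r)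
      = ContinuousLinearMap.id ℝ ((Fin m → ℝ) × ℝ))
    (hD2φ : fderiv ℝ (fderiv ℝ φ) (p, r) = 0)
    (hΔ : ∀ U V : (Fin m → ℝ) × ℝ, lightDelta m a φ δ U V (p, r) = 0)
    (hΔ' : ∀ U V : (Fin m → ℝ) × ℝ, fderiv ℝ (lightDelta m a φ δ U V) (p, r) = 0)
    (hΔ'' : ∀ U V : (Fin m → ℝ) × ℝ,
      fderiv ℝ (fderiv ℝ (lightDelta m a φ δ U V)) (p, r) = 0) :
    ∀ U V W₁ W₂ : (Fin m → ℝ) × ℝ,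
      a p r (fderiv ℝ (fderiv ℝ (fderiv ℝ φ)) (p, r) U W₁ W₂) V.1
        + a p r U.1 (fderiv ℝ (fderiv ℝ (fderiv ℝ φ)) (p, r) V W₁ W₂)
      = -(fderiv ℝ (fderiv ℝ δ) (p, r) W₁ W₂) * deriv (fun t => a p t) r U.1 V.1 := by
  intro U V W₁ W₂
  have hnhds : M ×ˢ I ∈ 𝓝 (p, r) := (hM.prod hIopen).mem_nhds ⟨hp, hr⟩
  have hg : ContDiffAt ℝ 2 (fun q : (Fin m → ℝ) × ℝ => a q.1 q.2) (p, r) :=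
    (ha_smooth.contDiffAt hnhds).of_le ENat.LEInfty.out
  have hΨ := hΨ_smooth.contDiffAt hnhds
  have hφ : ContDiffAt ℝ (minSmoothness ℝ 3) φ (p, r) :=
    hΨ.fst.of_le (minSmoothness_of_isRCLikeNormedField.trans_le ENat.LEInfty.out)
  have hδ : ContDiffAt ℝ 2 δ (p, r) := hΨ.snd.of_le ENat.LEInfty.out
  have hdt (s : ℝ) : fderiv ℝ (fun t => a p t) r s = s • deriv (fun t => a p t) r :=
    fderiv_eq_smul_deriv (f := a p) s
  simpa [hdt] using lightlike_third_jet_equation_general hg hφ hδ hΨp hDΨp hD2φ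
    (DFunLike.congr_fun (DFunLike.congr_fun (hΔ'' U V) W₁) W₂)
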